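/- Let (Ω,T) be a minimal subshift over a finite alphabet with uniform word frequencies (uniquely ergodic) that satisfies the leading sequence condition (LSC), i.e., conditions (α), (β) and (γ). Then every locally constant A : Ω → SL(2,ℝ) is uniform: there is Λ ∈ ℝ such that (1/n) log‖A(n,ω)‖ → Λ as n → ∞ uniformly in ω ∈ Ω. -/

import Mathlib

open Filter Topology MeasureTheory

noncomputable section

abbrev SL2 := Matrix.SpecialLinearGroup (Fin 2) ℝ

/-- Operator norm of a 2×2 real matrix acting on Euclidean ℝ². -/
def matNorm (M : Matrix (Fin 2) (Fin 2) ℝ) : ℝ :=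
  ‖LinearMap.toContinuousLinearMap (Matrix.toEuclideanLin M)‖

/-- Norm of an element of SL(2,ℝ). -/
def slNorm (M : SL2) : ℝ := matNorm (M : Matrix (Fin 2) (Fin 2) ℝ)

/-- Action of an SL(2,ℝ) matrix on a euclidean vector. -/
def slAct (M : SL2) (v : EuclideanSpace ℝ (Fin 2)) : EuclideanSpace ℝ (Fin 2) :=
  Matrix.toEuclideanLin (M : Matrix (Fin 2) (Fin 2) ℝ) v

variable {𝒜 : Type*}

/-- The shift by `k` on two-sided sequences; `shift 1` is the left shift `T`. -/
def shift (k : ℤ) (ω : ℤ → 𝒜) : ℤ → 𝒜 := fun n => ω (n + k)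

/-- `Ω ⊆ 𝒜^ℤ` is a subshift: nonempty, closed, invariant under the shift and its inverse. -/
structure IsSubshift [TopologicalSpace 𝒜] (Ω : Set (ℤ → 𝒜)) : Prop where
  nonempty : Ω.Nonempty
  closed : IsClosed Ω
  shift_mem : ∀ ω ∈ Ω, shift 1 ω ∈ Ω
  shift_neg_mem : ∀ ω ∈ Ω, shift (-1) ω ∈ Ω

/-- The word `ω(k) ω(k+1) ⋯ ω(k+n-1)`. -/
def word (ω : ℤ → 𝒜) (k : ℤ) (n : ℕ) : List 𝒜 := (List.range n).map fun i => ω (k + i)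

/-- `v` occurs in `ω` at position `k`. -/
def occursAt (v : List 𝒜) (ω : ℤ → 𝒜) (k : ℤ) : Prop := v = word ω k v.length

/-- The words of length `n` occurring in elements of `Ω`. -/
def WordsN (Ω : Set (ℤ → 𝒜)) (n : ℕ) : Set (List 𝒜) :=
  {v | ∃ ω ∈ Ω, ∃ k : ℤ, v = word ω k n}

/-- The (nonempty) finite words occurring in elements of `Ω`. -/
def Words (Ω : Set (ℤ → 𝒜)) : Set (List 𝒜) :=
  {v | 1 ≤ v.length ∧ v ∈ WordsN Ω v.length}

/-- `A` is locally constant on `Ω`: its value depends only on a finite window around 0. -/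
def LocConstOn (Ω : Set (ℤ → 𝒜)) {β : Type*} (A : (ℤ → 𝒜) → β) : Prop :=
  ∃ N : ℕ, ∀ ω ∈ Ω, ∀ ρ ∈ Ω, (∀ i : ℤ, |i| ≤ (N : ℤ) → ω i = ρ i) → A ω = A ρ

/-- The positive part of the cocycle: `cocycleP A n ω = A(T^{n-1}ω) ⋯ A(ω)`. -/
def cocycleP (A : (ℤ → 𝒜) → SL2) : ℕ → (ℤ → 𝒜) → SL2
  | 0, _ => 1
  | n + 1, ω => A (shift n ω) * cocycleP A n ω

/-- The full cocycle over the shift, `n ∈ ℤ`. -/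
def cocycle (A : (ℤ → 𝒜) → SL2) (n : ℤ) (ω : ℤ → 𝒜) : SL2 :=
  if 0 ≤ n then cocycleP A n.toNat ω else (cocycleP A (-n).toNat (shift n ω))⁻¹

/-- `A` is uniform on `Ω`: `(1/n) log‖A(n,ω)‖` converges uniformly on `Ω`. -/
def IsUniform (Ω : Set (ℤ → 𝒜)) (A : (ℤ → 𝒜) → SL2) : Prop :=
  ∃ Λ : ℝ, TendstoUniformlyOn
    (fun (n : ℕ) (ω : ℤ → 𝒜) => Real.log (slNorm (cocycle A n ω)) / n)
    (fun _ => Λ) atTop Ω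

/-- The number of occurrences of `v` in `ω(1)⋯ω(n)`. -/
def occCount (v : List 𝒜) (ω : ℤ → 𝒜) (n : ℕ) : ℕ :=
  Set.ncard {k : ℤ | 1 ≤ k ∧ k + v.length ≤ (n : ℤ) + 1 ∧ occursAt v ω k}

/-- Uniform existence of word frequencies (unique ergodicity). -/
def UniformWordFreq (Ω : Set (ℤ → 𝒜)) : Prop :=
  ∀ v ∈ Words Ω, ∃ ν : ℝ, TendstoUniformlyOn
    (fun (n : ℕ) (ω : ℤ → 𝒜) => (occCount v ω n : ℝ) / n) (fun _ => ν) atTop Ω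

/-- Minimality: every orbit is dense in `Ω`. -/
def IsMinimalSubshift [TopologicalSpace 𝒜] (Ω : Set (ℤ → 𝒜)) : Prop :=
  ∀ ω ∈ Ω, ∀ ρ ∈ Ω, ρ ∈ closure {σ : ℤ → 𝒜 | ∃ k : ℤ, σ = shift k ω}

/-- Condition (α): for all large `n`, the words of length `n` of `Ω` are exactly the
words `lead j (-k+1) ⋯ lead j (-k+n)`, `0 ≤ k ≤ n`, of the leading words. -/
def CondAlpha (Ω : Set (ℤ → 𝒜)) {r : ℕ} (lead : Fin r → (ℤ → 𝒜)) : Prop :=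
  (∀ j, lead j ∈ Ω) ∧ ∃ N : ℕ, ∀ n : ℕ, N ≤ n →
    WordsN Ω n = {v | ∃ j : Fin r, ∃ k : ℕ, k ≤ n ∧ v = word (lead j) (1 - (k : ℤ)) n}

/-- Condition (β): for every locally constant cocycle the Lyapunov limits along the
leading words exist in both time directions and all have the same value. -/
def CondBeta (Ω : Set (ℤ → 𝒜)) {r : ℕ} (lead : Fin r → (ℤ → 𝒜)) : Prop :=
  ∀ A : (ℤ → 𝒜) → SL2, LocConstOn Ω A → ∃ Λ : ℝ, ∀ j : Fin r,
    Tendsto (fun n : ℕ => Real.log (slNorm (cocycle A n (lead j))) / n) atTop (𝓝 Λ) ∧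
    Tendsto (fun n : ℕ => Real.log (slNorm (cocycle A (-(n : ℤ)) (lead j))) / n) atTop (𝓝 Λ)

/-- Condition (γ): along the leading words, for every locally constant cocycle and every
nonzero vector, at most one of the two one-sided exponents is negative. -/
def CondGamma (Ω : Set (ℤ → 𝒜)) {r : ℕ} (lead : Fin r → (ℤ → 𝒜)) : Prop :=
  ∀ A : (ℤ → 𝒜) → SL2, LocConstOn Ω A → ∀ j : Fin r,
    ∀ v : EuclideanSpace ℝ (Fin 2), v ≠ 0 →
    ¬ (limsup (fun n : ℕ => Real.log ‖slAct (cocycle A n (lead j)) v‖ / n) atTop < 0 ∧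
       limsup (fun n : ℕ => Real.log ‖slAct (cocycle A (-(n : ℤ)) (lead j)) v‖ / n) atTop < 0)

/-- The leading sequence condition (LSC). -/
def SatisfiesLSC (Ω : Set (ℤ → 𝒜)) : Prop :=
  ∃ (r : ℕ) (lead : Fin r → (ℤ → 𝒜)), CondAlpha Ω lead ∧ CondBeta Ω lead ∧ CondGamma Ω lead

/-- `F` is subadditive on the words of `Ω`. -/
def SubadditiveOn (Ω : Set (ℤ → 𝒜)) (F : List 𝒜 → ℝ) : Prop :=
  ∀ x y : List 𝒜, x ∈ Words Ω → y ∈ Words Ω → (x ++ y) ∈ Words Ω → F (x ++ y) ≤ F x + F y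

/-- `Fb` is the asymptotic mean `lim_n max { F x / n : x ∈ W(Ω)_n }` of `F`. -/
def IsAsympMean (Ω : Set (ℤ → 𝒜)) (F : List 𝒜 → ℝ) (Fb : ℝ) : Prop :=
  Tendsto (fun n : ℕ => sSup ((fun x => F x / n) '' WordsN Ω n)) atTop (𝓝 Fb)

/-- Maximal number of pairwise disjoint occurrences of `v` in `ω(1)⋯ω(n)`. -/
def disjCount (v : List 𝒜) (ω : ℤ → 𝒜) (n : ℕ) : ℕ :=
  sSup {m : ℕ | ∃ S : Finset ℤ, S.card = m ∧
    (∀ k ∈ S, 1 ≤ k ∧ k + v.length ≤ (n : ℤ) + 1 ∧ occursAt v ω k) ∧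
    (∀ k ∈ S, ∀ l ∈ S, k ≠ l → (v.length : ℤ) ≤ |k - l|)}

/-- Condition (PQ) for the one-sided word `p(1)p(2)⋯`. -/
def CondPQ (p : ℤ → 𝒜) : Prop :=
  ∃ c : ℝ, 0 < c ∧ ∀ m : ℕ, 1 ≤ m →
    c ≤ liminf (fun n : ℕ => (m : ℝ) / n * disjCount (word p 1 m) p n) atTop

/-- ℓ²(ℤ) over the reals. -/
abbrev Ell2Z : Type := lp (fun _ : ℤ => ℝ) 2

/-- `H` acts as the Jacobi operator with coefficients `f, g` at `ω`. -/
def IsJacobiAt (f g : (ℤ → 𝒜) → ℝ) (ω : ℤ → 𝒜) (H : Ell2Z →L[ℝ] Ell2Z) : Prop :=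
  ∀ u : Ell2Z, ∀ n : ℤ,
    (H u : ∀ _ : ℤ, ℝ) n =
      f (shift n ω) * (u : ∀ _ : ℤ, ℝ) (n - 1) + f (shift (n + 1) ω) * (u : ∀ _ : ℤ, ℝ) (n + 1)
        + g (shift n ω) * (u : ∀ _ : ℤ, ℝ) n

/-- The pair `(f,g)` is periodic on `Ω`. -/
def PeriodicPair (Ω : Set (ℤ → 𝒜)) (f g : (ℤ → 𝒜) → ℝ) : Prop :=
  ∃ P : ℕ, 1 ≤ P ∧ ∀ ω ∈ Ω, f (shift (P : ℤ) ω) = f ω ∧ g (shift (P : ℤ) ω) = g ω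

/-- `S ⊆ ℝ` is a Cantor set of Lebesgue measure zero: compact, empty interior,
no isolated points, Lebesgue measure zero. -/
def IsMeasureZeroCantor (S : Set ℝ) : Prop :=
  IsCompact S ∧ interior S = ∅ ∧ Perfect S ∧ volume S = 0

/-- `n` copies of `x` separated by `n-1` copies of the letter `l`. -/
def sepJoin (x : List 𝒜) (l : 𝒜) (m : ℕ) : List 𝒜 :=
  (List.replicate (m - 1) (x ++ [l])).flatten ++ x

/-- `Blk a nseq (k+1)` is the block `block(k)` of the simple Toeplitz construction
(with `Blk a nseq 0 = block(-1) = ε`). -/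
def Blk (a : ℕ → 𝒜) (nseq : ℕ → ℕ) : ℕ → List 𝒜
  | 0 => []
  | k + 1 => sepJoin (Blk a nseq k) (a k) (nseq k)

/-- `p(1)p(2)⋯` is the one-sided word `block(∞)`: every block is a prefix of it. -/
def IsBlockInf (a : ℕ → 𝒜) (nseq : ℕ → ℕ) (p : ℤ → 𝒜) : Prop :=
  ∀ k : ℕ, word p 1 (Blk a nseq k).length = Blk a nseq k

/-- The simple Toeplitz subshift generated by `block(∞) = p(1)p(2)⋯`: all two-sided
sequences whose finite subwords all occur in `block(∞)`. -/
def toeplitzΩ (p : ℤ → 𝒜) : Set (ℤ → 𝒜) :=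
  {ω | ∀ (i : ℤ) (n : ℕ), ∃ l : ℤ, 1 ≤ l ∧ word ω i n = word p l n}

/-- The eventual alphabet: letters occurring infinitely often in `(a_k)`. -/
def EvAlph (a : ℕ → 𝒜) : Set 𝒜 := {x | ∀ K : ℕ, ∃ k, K ≤ k ∧ a k = x}

/-- The leading word `p^R v | p`: equals `p(n+1)` for `n ≥ 0`, carries the word `v` on
positions `-|v|, …, -1`, and equals `p(-(n+|v|))` for `n < -|v|`. -/
def leadWordGen (p : ℤ → 𝒜) (v : List 𝒜) : ℤ → 𝒜 := fun n =>
  if 0 ≤ n then p (n + 1)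
  else if -(v.length : ℤ) ≤ n then v.getD (n + v.length).toNat (p 1)
  else p (-(n + v.length))

/-- The Gauss map. -/
def gaussMap (x : ℝ) : ℝ := 1 / x - ⌊1 / x⌋

/-- `cfSeq α n` is the continued fraction coefficient `a_{n+1}` of `α`. -/
def cfSeq (α : ℝ) (n : ℕ) : ℕ := ⌊1 / (gaussMap^[n] α)⌋₊

/-- The standard Sturmian words: `sturmW α (n+1) = s_n`, `sturmW α 0 = s_{-1} = 1`,
`sturmW α 1 = s_0 = 0`, `s_1 = s_0^{a_1 - 1} s_{-1}`, `s_n = s_{n-1}^{a_n} s_{n-2}`. -/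
def sturmW (α : ℝ) : ℕ → List (Fin 2)
  | 0 => [1]
  | 1 => [0]
  | 2 => List.replicate (cfSeq α 0 - 1) (0 : Fin 2) ++ [1]
  | n + 3 => (List.replicate (cfSeq α (n + 1)) (sturmW α (n + 2))).flatten ++ sturmW α (n + 1)

/-- The Sturmian subshift with rotation number `α`: all two-sided sequences whose finite
subwords occur in some `s_n`. -/
def sturmΩ (α : ℝ) : Set (ℤ → Fin 2) :=
  {ω | ∀ (i : ℤ) (n : ℕ), ∃ m : ℕ, word ω i n <:+: sturmW α m}

/-- The positive cocycle of a map `A` over a transformation `T`: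
`cocycleH T A n ω = A(T^{n-1}ω) ⋯ A(ω)`. -/
def cocycleH {Ω : Type*} (T : Ω → Ω) (A : Ω → SL2) : ℕ → Ω → SL2
  | 0, _ => 1
  | n + 1, ω => A (T^[n] ω) * cocycleH T A n ω

end

/-!
Fix a leading word `ω` and write `E p` for the cocycle at time `p ∈ ℤ` along `ω`, so that the
cocycle over a window `[p, q)` of `ω` is `E q * (E p)⁻¹`. By (β), `‖E n‖` and `‖E (-n)‖` grow at
the same exponential rate `Λ`; subadditivity then bounds `log ‖E q * (E p)⁻¹‖` above by
`Λ (q - p) + o(q - p)` when `p ≤ 0 ≤ q`. If `Λ > 0`, the most contracted directions of `E n`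
converge (Ruelle) to a direction `v` that decays like `exp (-Λ n)`, and likewise to some `w` for
`E (-n)`. Condition (γ) says that `v` and `w` are transversal. As `SL(2,ℝ)` preserves area,
`|v ∧ w| ≤ ‖E q v‖ ‖E q w‖ ≤ ‖E q v‖ ‖E q * (E p)⁻¹‖ ‖E p w‖`, which is the matching lower bound.
By (α), up to a bounded displacement of the endpoints, the cocycle over any point of the subshift
is the cocycle over such a window of a leading word.
-/

section L2Operator

open scoped Matrix.Norms.L2Operator

lemma slNorm_eq_l2_opNorm (M : SL2) : slNorm M = ‖(M : Matrix (Fin 2) (Fin 2) ℝ)‖ := rfl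

lemma slNorm_one : slNorm 1 = 1 := by
  rw [slNorm_eq_l2_opNorm, Matrix.SpecialLinearGroup.coe_one, norm_one]

lemma slNorm_mul_le (M P : SL2) : slNorm (M * P) ≤ slNorm M * slNorm P := by
  rw [slNorm_eq_l2_opNorm, Matrix.SpecialLinearGroup.coe_mul]
  exact Matrix.l2_opNorm_mul _ _

lemma quarterTurn_mem_unitary : (!![0, -1; 1, 0] : Matrix (Fin 2) (Fin 2) ℝ) ∈ unitary _ := by
  rw [Unitary.mem_iff]
  constructor <;> ext i j <;> fin_cases i <;> fin_cases j <;>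
    simp [Matrix.mul_apply, Matrix.star_eq_conjTranspose]

lemma slNorm_inv (M : SL2) : slNorm M⁻¹ = slNorm M := by
  have hconj : ((M⁻¹ : SL2) : Matrix (Fin 2) (Fin 2) ℝ) =
      !![0, -1; 1, 0] * (star (!![0, -1; 1, 0] * (M : Matrix (Fin 2) (Fin 2) ℝ))) := by
    ext i j
    fin_cases i <;> fin_cases j <;>
      simp [Matrix.SpecialLinearGroup.coe_inv, Matrix.adjugate_fin_two, Matrix.mul_apply,
        Matrix.star_eq_conjTranspose, Matrix.vecMul, dotProduct, Fin.sum_univ_two]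
  rw [slNorm_eq_l2_opNorm, hconj, CStarRing.norm_mem_unitary_mul _ quarterTurn_mem_unitary,
    norm_star, CStarRing.norm_mem_unitary_mul _ quarterTurn_mem_unitary, slNorm_eq_l2_opNorm]

end L2Operator

lemma slNorm_nonneg (M : SL2) : 0 ≤ slNorm M := norm_nonneg _

lemma one_le_slNorm (M : SL2) : 1 ≤ slNorm M := by
  have h := slNorm_mul_le M M⁻¹
  rw [mul_inv_cancel, slNorm_one, slNorm_inv] at h
  nlinarith [slNorm_nonneg M]

lemma slNorm_pos (M : SL2) : 0 < slNorm M := zero_lt_one.trans_le (one_le_slNorm M)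

lemma slAct_mul (M P : SL2) (v : EuclideanSpace ℝ (Fin 2)) :
    slAct (M * P) v = slAct M (slAct P v) := by
  simp [slAct, Matrix.toLpLin_mul_same]

lemma slAct_inv_slAct (M : SL2) (v : EuclideanSpace ℝ (Fin 2)) : slAct M⁻¹ (slAct M v) = v := by
  rw [← slAct_mul, inv_mul_cancel]
  simp [slAct]

lemma slAct_apply (M : SL2) (v : EuclideanSpace ℝ (Fin 2)) (i : Fin 2) :
    slAct M v i = M i 0 * v 0 + M i 1 * v 1 := by
  simp [slAct, Matrix.mulVec, dotProduct, Fin.sum_univ_two]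

lemma norm_slAct_le (M : SL2) (v : EuclideanSpace ℝ (Fin 2)) : ‖slAct M v‖ ≤ slNorm M * ‖v‖ :=
  (LinearMap.toContinuousLinearMap (Matrix.toEuclideanLin M.1)).le_opNorm v

lemma slAct_ne_zero (M : SL2) {v : EuclideanSpace ℝ (Fin 2)} (hv : v ≠ 0) : slAct M v ≠ 0 := by
  intro h
  apply hv
  rw [← slAct_inv_slAct M v, h]
  exact map_zero (Matrix.toEuclideanLin (M⁻¹ : SL2).1)

lemma norm_slAct_pos (M : SL2) {v : EuclideanSpace ℝ (Fin 2)} (hv : ‖v‖ = 1) : 0 < ‖slAct M v‖ :=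
  norm_pos_iff.2 <| slAct_ne_zero M <| norm_ne_zero_iff.1 <| hv ▸ one_ne_zero

lemma slAct_neg (M : SL2) (v : EuclideanSpace ℝ (Fin 2)) : slAct M (-v) = -slAct M v :=
  map_neg (Matrix.toEuclideanLin M.1) v

lemma slAct_add (M : SL2) (v w : EuclideanSpace ℝ (Fin 2)) :
    slAct M (v + w) = slAct M v + slAct M w :=
  map_add (Matrix.toEuclideanLin M.1) v w

lemma slAct_smul (M : SL2) (c : ℝ) (v : EuclideanSpace ℝ (Fin 2)) :
    slAct M (c • v) = c • slAct M v :=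
  map_smul (Matrix.toEuclideanLin M.1) c v

lemma log_slNorm_nonneg (M : SL2) : 0 ≤ Real.log (slNorm M) := Real.log_nonneg (one_le_slNorm M)

lemma log_slNorm_mul_le (M P : SL2) :
    Real.log (slNorm (M * P)) ≤ Real.log (slNorm M) + Real.log (slNorm P) := by
  rw [← Real.log_mul (slNorm_pos _).ne' (slNorm_pos _).ne']
  exact Real.log_le_log (slNorm_pos _) (slNorm_mul_le _ _)

lemma abs_log_slNorm_mul_mul_sub_le (P M Q : SL2) :
    |Real.log (slNorm (P * M * Q)) - Real.log (slNorm M)| ≤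
      Real.log (slNorm P) + Real.log (slNorm Q) := by
  have hle (P M Q : SL2) : Real.log (slNorm (P * M * Q)) ≤
      Real.log (slNorm P) + Real.log (slNorm M) + Real.log (slNorm Q) :=
    (log_slNorm_mul_le _ _).trans (add_le_add_left (log_slNorm_mul_le _ _) _)
  have hback := hle P⁻¹ (P * M * Q) Q⁻¹
  rw [show P⁻¹ * (P * M * Q) * Q⁻¹ = M by group, slNorm_inv, slNorm_inv] at hback
  exact abs_le.2 ⟨by linarith, by linarith [hle P M Q]⟩

lemma abs_log_slNorm_mul_inv_sub_log_slNorm_mul_inv_le (P Q P' Q' : SL2) :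
    |Real.log (slNorm (Q * P⁻¹)) - Real.log (slNorm (Q' * P'⁻¹))| ≤
      Real.log (slNorm (Q * Q'⁻¹)) + Real.log (slNorm (P * P'⁻¹)) := by
  have h := abs_log_slNorm_mul_mul_sub_le (Q * Q'⁻¹) (Q' * P'⁻¹) (P' * P⁻¹)
  rwa [show Q * Q'⁻¹ * (Q' * P'⁻¹) * (P' * P⁻¹) = Q * P⁻¹ by group, ← slNorm_inv (P' * P⁻¹),
    mul_inv_rev, inv_inv] at h

/-- The determinant `v ∧ w` of a pair of vectors of the Euclidean plane, i.e. the area form.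
It is what `SL(2,ℝ)` preserves. -/
def wedge (v w : EuclideanSpace ℝ (Fin 2)) : ℝ := v 0 * w 1 - v 1 * w 0

lemma norm_sq_eq_sq_add_sq (v : EuclideanSpace ℝ (Fin 2)) : ‖v‖ ^ 2 = v 0 ^ 2 + v 1 ^ 2 := by
  simp [EuclideanSpace.norm_sq_eq, Fin.sum_univ_two]

lemma wedge_slAct (M : SL2) (v w : EuclideanSpace ℝ (Fin 2)) :
    wedge (slAct M v) (slAct M w) = wedge v w := by
  have hdet := M.det_coe
  rw [Matrix.det_fin_two] at hdet
  simp only [wedge, slAct_apply]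
  linear_combination (v 0 * w 1 - v 1 * w 0) * hdet

lemma abs_wedge_le (v w : EuclideanSpace ℝ (Fin 2)) : |wedge v w| ≤ ‖v‖ * ‖w‖ := by
  apply abs_le_of_sq_le_sq _ (by positivity)
  rw [mul_pow, norm_sq_eq_sq_add_sq, norm_sq_eq_sq_add_sq, wedge]
  nlinarith [sq_nonneg (v 0 * w 0 + v 1 * w 1)]

lemma abs_wedge_le_norm_slAct_mul (P Q : SL2) (v w : EuclideanSpace ℝ (Fin 2)) :
    |wedge v w| ≤ ‖slAct P v‖ * (slNorm (P * Q⁻¹) * ‖slAct Q w‖) := by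
  have hPw : slAct P w = slAct (P * Q⁻¹) (slAct Q w) := by
    rw [← slAct_mul, inv_mul_cancel_right]
  calc |wedge v w| = |wedge (slAct P v) (slAct P w)| := by rw [wedge_slAct]
    _ ≤ ‖slAct P v‖ * ‖slAct P w‖ := abs_wedge_le _ _
    _ ≤ ‖slAct P v‖ * (slNorm (P * Q⁻¹) * ‖slAct Q w‖) := by
      rw [hPw]
      gcongr
      exact norm_slAct_le _ _

lemma norm_sub_le_or_norm_add_le_two_mul_abs_wedge {v w : EuclideanSpace ℝ (Fin 2)}
    (hv : ‖v‖ = 1) (hw : ‖w‖ = 1) :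
    ‖v - w‖ ≤ 2 * |wedge v w| ∨ ‖v + w‖ ≤ 2 * |wedge v w| := by
  have hv' := norm_sq_eq_sq_add_sq v
  have hw' := norm_sq_eq_sq_add_sq w
  rw [hv] at hv'
  rw [hw] at hw'
  have lagrange : (v 0 * w 0 + v 1 * w 1) ^ 2 + wedge v w ^ 2 = 1 := by
    simp only [wedge]
    linear_combination (-(w 0 ^ 2 + w 1 ^ 2)) * hv' - hw'
  rcases le_total 0 (v 0 * w 0 + v 1 * w 1) with hinner | hinner
  · left
    apply le_of_sq_le_sq _ (by positivity)
    rw [norm_sq_eq_sq_add_sq, mul_pow, sq_abs, PiLp.sub_apply, PiLp.sub_apply]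
    nlinarith
  · right
    apply le_of_sq_le_sq _ (by positivity)
    rw [norm_sq_eq_sq_add_sq, mul_pow, sq_abs, PiLp.add_apply, PiLp.add_apply]
    nlinarith

lemma eq_or_eq_neg_of_wedge_eq_zero {v w : EuclideanSpace ℝ (Fin 2)} (hv : ‖v‖ = 1) (hw : ‖w‖ = 1)
    (h : wedge v w = 0) : v = w ∨ v = -w := by
  have := norm_sub_le_or_norm_add_le_two_mul_abs_wedge hv hw
  simpa only [h, abs_zero, mul_zero, norm_le_zero_iff, sub_eq_zero, add_eq_zero_iff_eq_neg]
    using this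

lemma inv_slNorm_le_norm_slAct (M : SL2) {v : EuclideanSpace ℝ (Fin 2)} (hv : ‖v‖ = 1) :
    (slNorm M)⁻¹ ≤ ‖slAct M v‖ := by
  have h := norm_slAct_le M⁻¹ (slAct M v)
  rw [slAct_inv_slAct, slNorm_inv, hv] at h
  rwa [inv_le_iff_one_le_mul₀' (slNorm_pos M)]

lemma exists_norm_slAct_eq_slNorm (M : SL2) :
    ∃ v : EuclideanSpace ℝ (Fin 2), ‖v‖ = 1 ∧ ‖slAct M v‖ = slNorm M := by
  let f := LinearMap.toContinuousLinearMap (Matrix.toEuclideanLin M.1)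
  obtain ⟨v, hv, hmax⟩ := (isCompact_sphere (0 : EuclideanSpace ℝ (Fin 2)) 1).exists_sSup_image_eq
    (NormedSpace.sphere_nonempty.2 zero_le_one) f.continuous.norm.continuousOn
  exact ⟨v, mem_sphere_zero_iff_norm.1 hv, hmax.symm.trans f.sSup_sphere_eq_norm⟩

lemma exists_norm_slAct_eq_inv_slNorm (M : SL2) :
    ∃ v : EuclideanSpace ℝ (Fin 2), ‖v‖ = 1 ∧ ‖slAct M v‖ = (slNorm M)⁻¹ := by
  obtain ⟨w, hw, hMw⟩ := exists_norm_slAct_eq_slNorm M⁻¹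
  rw [slNorm_inv] at hMw
  have hMMw : slAct M (slAct M⁻¹ w) = w := by simpa using slAct_inv_slAct M⁻¹ w
  have hpos := slNorm_pos M
  refine ⟨(slNorm M)⁻¹ • slAct M⁻¹ w, ?_, ?_⟩
  · rw [norm_smul, hMw, norm_inv, Real.norm_of_nonneg hpos.le, inv_mul_cancel₀ hpos.ne']
  · rw [slAct_smul, hMMw, norm_smul, hw, norm_inv, Real.norm_of_nonneg hpos.le, mul_one]

lemma tendstoUniformlyOn_div_natCast {ι : Type*} {f : ℕ → ι → ℝ} {L : ℝ} {s : Set ι}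
    (h : ∀ ε > 0, ∃ C, ∀ n : ℕ, ∀ i ∈ s, |f n i - L * n| ≤ ε * n + C) :
    TendstoUniformlyOn (fun n i => f n i / n) (fun _ => L) atTop s := by
  rw [Metric.tendstoUniformlyOn_iff]
  intro ε hε
  obtain ⟨C, hC⟩ := h (ε / 2) (half_pos hε)
  filter_upwards [(tendsto_const_div_atTop_nhds_zero_nat C).eventually_lt_const (half_pos hε),
    eventually_gt_atTop 0] with n hn hn0 i hi
  have hpos : (0 : ℝ) < n := Nat.cast_pos.2 hn0
  have hdiv : f n i / n - L = (f n i - L * n) / n := by field_simp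
  rw [dist_comm, Real.dist_eq, hdiv, abs_div, abs_of_pos hpos, div_lt_iff₀ hpos]
  rw [div_lt_iff₀ hpos] at hn
  linarith [hC n i hi]

lemma tendsto_div_natCast_iff {f : ℕ → ℝ} {L : ℝ} :
    Tendsto (fun n : ℕ => f n / n) atTop (𝓝 L) ↔
      ∀ ε > 0, ∃ C, ∀ n : ℕ, |f n - L * n| ≤ ε * n + C := by
  refine ⟨fun h ε hε => ?_, fun h => ?_⟩
  · obtain ⟨N, hN⟩ := Metric.tendsto_atTop.1 h ε hε
    obtain ⟨C, hC⟩ := ((Set.finite_Iio (N + 1)).image fun n : ℕ => |f n - L * n|).bddAbove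
    refine ⟨max C 0, fun n => ?_⟩
    have hεn : 0 ≤ ε * n := by positivity
    rcases lt_or_ge n (N + 1) with hn | hn
    · linarith [hC ⟨n, hn, rfl⟩, le_max_left C 0]
    · have hpos : (0 : ℝ) < n := Nat.cast_pos.2 (by omega)
      have hclose := hN n (by omega)
      have hdiv : f n / n - L = (f n - L * n) / n := by field_simp
      rw [Real.dist_eq, hdiv, abs_div, abs_of_pos hpos, div_lt_iff₀ hpos] at hclose
      linarith [le_max_right C 0]
  · have := tendstoUniformlyOn_div_natCast (f := fun n (_ : Unit) => f n) (L := L) (s := {()})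
      fun ε hε => (h ε hε).imp fun C hC n _ _ => hC n
    exact tendstoUniformlyOn_singleton_iff_tendsto.1 this

/-- `v` is a unit vector that `M` contracts as much as a matrix of its norm and of determinant one
can, that is, a right singular vector for the smaller singular value. -/
def IsMostContracted (M : SL2) (v : EuclideanSpace ℝ (Fin 2)) : Prop :=
  ‖v‖ = 1 ∧ ‖slAct M v‖ = (slNorm M)⁻¹

lemma IsMostContracted.neg {M : SL2} {v : EuclideanSpace ℝ (Fin 2)} (h : IsMostContracted M v) :
    IsMostContracted M (-v) := by
  rwa [IsMostContracted, slAct_neg, norm_neg, norm_neg]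

lemma IsMostContracted.exists_norm_sub_le {M : SL2} {v : EuclideanSpace ℝ (Fin 2)}
    (hv : IsMostContracted M v) (P : SL2) :
    ∃ w, IsMostContracted P w ∧
      ‖v - w‖ ≤ 2 * slNorm (P * M⁻¹) / (slNorm M * slNorm P) := by
  obtain ⟨w, hw⟩ : ∃ w, IsMostContracted P w := exists_norm_slAct_eq_inv_slNorm P
  have hwedge : 2 * |wedge v w| ≤ 2 * slNorm (P * M⁻¹) / (slNorm M * slNorm P) := by
    have h := abs_wedge_le_norm_slAct_mul M P v w
    rw [hv.2, hw.2, ← slNorm_inv (M * P⁻¹), mul_inv_rev, inv_inv] at h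
    refine (mul_le_mul_of_nonneg_left h zero_le_two).trans_eq ?_
    ring
  rcases norm_sub_le_or_norm_add_le_two_mul_abs_wedge hv.1 hw.1 with h | h
  · exact ⟨w, hw, h.trans hwedge⟩
  · exact ⟨-w, hw.neg, by rw [sub_neg_eq_add]; exact h.trans hwedge⟩

lemma exists_seq_isMostContracted (M : ℕ → SL2) :
    ∃ x : ℕ → EuclideanSpace ℝ (Fin 2), (∀ n, IsMostContracted (M n) (x n)) ∧
      ∀ n, ‖x n - x (n + 1)‖ ≤
        2 * slNorm (M (n + 1) * (M n)⁻¹) / (slNorm (M n) * slNorm (M (n + 1))) := by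
  obtain ⟨x₀, hx₀⟩ : ∃ x₀, IsMostContracted (M 0) x₀ := exists_norm_slAct_eq_inv_slNorm (M 0)
  choose! next hnext hdist using fun n v (hv : IsMostContracted (M n) v) =>
    hv.exists_norm_sub_le (M (n + 1))
  let x : ℕ → EuclideanSpace ℝ (Fin 2) := Nat.rec x₀ next
  have hx : ∀ n, IsMostContracted (M n) (x n) := Nat.rec hx₀ fun n => hnext n (x n)
  exact ⟨x, hx, fun n => hdist n (x n) (hx n)⟩

lemma inv_slNorm_le_geometric {M : SL2} {c ρ : ℝ} (hc : 0 < c) (hρ : 0 < ρ) {n : ℕ}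
    (h : c * ρ ^ n ≤ slNorm M) : (slNorm M)⁻¹ ≤ (c ^ 2)⁻¹ * (slNorm M * (ρ ^ 2)⁻¹ ^ n) := by
  have hs := slNorm_pos M
  have hsq : (c * ρ ^ n) ^ 2 ≤ slNorm M ^ 2 := by gcongr
  calc (slNorm M)⁻¹ = slNorm M * (slNorm M ^ 2)⁻¹ := by field_simp
    _ ≤ slNorm M * ((c * ρ ^ n) ^ 2)⁻¹ := by gcongr
    _ = (c ^ 2)⁻¹ * (slNorm M * (ρ ^ 2)⁻¹ ^ n) := by
      rw [inv_pow, ← pow_mul, mul_comm 2 n, pow_mul, mul_pow, mul_inv]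
      ring

section Contraction

variable {M : ℕ → SL2} {K : ℝ} (hK : ∀ n, slNorm (M (n + 1) * (M n)⁻¹) ≤ K)
  {x : ℕ → EuclideanSpace ℝ (Fin 2)} (hx : ∀ n, IsMostContracted (M n) (x n))
  (hdist : ∀ n, ‖x n - x (n + 1)‖ ≤
    2 * slNorm (M (n + 1) * (M n)⁻¹) / (slNorm (M n) * slNorm (M (n + 1))))
  {c ρ : ℝ} (hc : 0 < c) (hρ : 1 < ρ) (hgrowth : ∀ n, c * ρ ^ n ≤ slNorm (M n))

include hK hdist hc hρ hgrowth in
lemma dist_le_geometric_of_le_slNorm (n : ℕ) :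
    dist (x n) (x (n + 1)) ≤ 2 * K / c ^ 2 * (ρ ^ 2)⁻¹ ^ n := by
  have hnext : c * ρ ^ n ≤ slNorm (M (n + 1)) :=
    (mul_le_mul_of_nonneg_left (pow_le_pow_right₀ hρ.le n.le_succ) hc.le).trans (hgrowth (n + 1))
  have hK₀ : 0 ≤ K := (slNorm_nonneg _).trans (hK n)
  calc dist (x n) (x (n + 1))
      ≤ 2 * slNorm (M (n + 1) * (M n)⁻¹) / (slNorm (M n) * slNorm (M (n + 1))) :=
        (dist_eq_norm _ _).trans_le (hdist n)
    _ ≤ 2 * K / ((c * ρ ^ n) * (c * ρ ^ n)) := by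
        gcongr
        exacts [hK n, slNorm_nonneg _, hgrowth n]
    _ = 2 * K / c ^ 2 * (ρ ^ 2)⁻¹ ^ n := by
        rw [inv_pow, ← pow_mul, mul_comm 2 n, pow_mul]
        field_simp

include hK hx hdist hc hρ hgrowth in
lemma exists_norm_slAct_le_geometric {v : EuclideanSpace ℝ (Fin 2)}
    (hv : Tendsto x atTop (𝓝 v)) :
    ∃ D, 0 < D ∧ ∀ n, ‖slAct (M n) v‖ ≤ D * (slNorm (M n) * (ρ ^ 2)⁻¹ ^ n) := by
  have hρ₀ : 0 < ρ := zero_lt_one.trans hρ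
  have hratio : (ρ ^ 2)⁻¹ < 1 := inv_lt_one_of_one_lt₀ (one_lt_pow₀ hρ two_ne_zero)
  let E := 2 * K / c ^ 2 / (1 - (ρ ^ 2)⁻¹)
  have hlim (n : ℕ) : dist (x n) v ≤ E * (ρ ^ 2)⁻¹ ^ n :=
    (dist_le_of_le_geometric_of_tendsto _ _ hratio
      (dist_le_geometric_of_le_slNorm hK hdist hc hρ hgrowth) hv n).trans_eq
        (mul_div_right_comm _ _ _)
  have hE : 0 ≤ E := by
    have hK₀ : 0 ≤ K := (slNorm_nonneg _).trans (hK 0)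
    exact div_nonneg (by positivity) (sub_nonneg.2 hratio.le)
  refine ⟨(c ^ 2)⁻¹ + E, by positivity, fun n => ?_⟩
  calc ‖slAct (M n) v‖ = ‖slAct (M n) (x n) + slAct (M n) (v - x n)‖ := by
        rw [← slAct_add, add_sub_cancel]
    _ ≤ (slNorm (M n))⁻¹ + slNorm (M n) * dist (x n) v := by
        refine (norm_add_le _ _).trans (add_le_add (hx n).2.le ?_)
        rw [dist_comm, dist_eq_norm]
        exact norm_slAct_le _ _
    _ ≤ (c ^ 2)⁻¹ * (slNorm (M n) * (ρ ^ 2)⁻¹ ^ n) + slNorm (M n) * (E * (ρ ^ 2)⁻¹ ^ n) :=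
        add_le_add (inv_slNorm_le_geometric hc hρ₀ (hgrowth n))
          (mul_le_mul_of_nonneg_left (hlim n) (slNorm_nonneg _))
    _ = ((c ^ 2)⁻¹ + E) * (slNorm (M n) * (ρ ^ 2)⁻¹ ^ n) := by ring

end Contraction

lemma exists_exp_mul_pow_le_slNorm {M : ℕ → SL2} {L δ : ℝ}
    (h : Tendsto (fun n : ℕ => Real.log (slNorm (M n)) / n) atTop (𝓝 L)) (hδ : 0 < δ) :
    ∃ c, 0 < c ∧ ∀ n, c * Real.exp (L - δ) ^ n ≤ slNorm (M n) := by
  obtain ⟨C, hC⟩ := tendsto_div_natCast_iff.1 h δ hδ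
  refine ⟨Real.exp (-C), Real.exp_pos _, fun n => ?_⟩
  rw [← Real.exp_nat_mul, ← Real.exp_add, ← Real.le_log_iff_exp_le (slNorm_pos _)]
  linarith [neg_le_of_abs_le (hC n)]

lemma log_norm_slAct_le_of_norm_slAct_le {M : ℕ → SL2} {v : EuclideanSpace ℝ (Fin 2)} {D μ : ℝ}
    (hv : ‖v‖ = 1) (hD : 0 < D)
    (h : ∀ n, ‖slAct (M n) v‖ ≤ D * (slNorm (M n) * (Real.exp μ ^ 2)⁻¹ ^ n)) (n : ℕ) :
    Real.log ‖slAct (M n) v‖ ≤ Real.log D + Real.log (slNorm (M n)) - 2 * μ * n := by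
  have hexp : (Real.exp μ ^ 2)⁻¹ ^ n = Real.exp (-(2 * μ * n)) := by
    rw [← Real.exp_nat_mul, ← Real.exp_neg, ← Real.exp_nat_mul]
    push_cast
    ring_nf
  have hlog := Real.log_le_log (norm_slAct_pos _ hv) (h n)
  rw [hexp, Real.log_mul hD.ne' (by have := slNorm_pos (M n); positivity),
    Real.log_mul (slNorm_pos _).ne' (Real.exp_ne_zero _), Real.log_exp] at hlog
  linarith

theorem exists_tendsto_log_norm_slAct_div {M : ℕ → SL2} {K L : ℝ}
    (hK : ∀ n, slNorm (M (n + 1) * (M n)⁻¹) ≤ K) (hL : 0 < L)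
    (h : Tendsto (fun n : ℕ => Real.log (slNorm (M n)) / n) atTop (𝓝 L)) :
    ∃ v : EuclideanSpace ℝ (Fin 2), ‖v‖ = 1 ∧
      Tendsto (fun n : ℕ => Real.log ‖slAct (M n) v‖ / n) atTop (𝓝 (-L)) := by
  obtain ⟨x, hx, hdist⟩ := exists_seq_isMostContracted M
  have hρ {δ : ℝ} (hδ : δ ≤ L / 2) : 1 < Real.exp (L - δ) := Real.one_lt_exp_iff.2 (by linarith)
  obtain ⟨v, hv⟩ : ∃ v, Tendsto x atTop (𝓝 v) := by
    obtain ⟨c, hc, hgrowth⟩ := exists_exp_mul_pow_le_slNorm h (half_pos hL)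
    exact cauchySeq_tendsto_of_complete <| cauchySeq_of_le_geometric _ _
      (inv_lt_one_of_one_lt₀ (one_lt_pow₀ (hρ le_rfl) two_ne_zero))
      (dist_le_geometric_of_le_slNorm hK hdist hc (hρ le_rfl) hgrowth)
  have hv₁ : ‖v‖ = 1 :=
    tendsto_nhds_unique hv.norm (by simp only [(hx _).1, tendsto_const_nhds])
  refine ⟨v, hv₁, tendsto_div_natCast_iff.2 fun ε hε => ?_⟩
  let δ := min (ε / 3) (L / 2)
  have hδ : 0 < δ := lt_min (by linarith) (half_pos hL)
  have hδε : δ ≤ ε / 3 := min_le_left _ _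
  obtain ⟨c, hc, hgrowth⟩ := exists_exp_mul_pow_le_slNorm h hδ
  obtain ⟨D, hD, hdecay⟩ :=
    exists_norm_slAct_le_geometric hK hx hdist hc (hρ (min_le_right _ _)) hgrowth hv
  obtain ⟨C, hC⟩ := tendsto_div_natCast_iff.1 h δ hδ
  refine ⟨max C (Real.log D + C), fun n => abs_le.2 ⟨?_, ?_⟩⟩
  · have hlower := Real.log_le_log (inv_pos.2 (slNorm_pos _)) (inv_slNorm_le_norm_slAct (M n) hv₁)
    rw [Real.log_inv] at hlower
    have hδn : δ * n ≤ ε * n := by gcongr; linarith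
    linarith [le_of_abs_le (hC n), le_max_left C (Real.log D + C)]
  · have hupper := log_norm_slAct_le_of_norm_slAct_le hv₁ hD hdecay n
    have hδn : 3 * δ * n ≤ ε * n := by gcongr; linarith
    linarith [le_of_abs_le (hC n), le_max_right C (Real.log D + C)]

section TwoSided

variable {B D : ℕ → SL2} {L : ℝ}
  (hB : Tendsto (fun n : ℕ => Real.log (slNorm (B n)) / n) atTop (𝓝 L))
  (hD : Tendsto (fun n : ℕ => Real.log (slNorm (D n)) / n) atTop (𝓝 L))

include hB hD in
lemma exists_log_slNorm_mul_inv_le {ε : ℝ} (hε : 0 < ε) :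
    ∃ C, ∀ m k : ℕ, Real.log (slNorm (B m * (D k)⁻¹)) ≤ L * (m + k) + ε * (m + k) + C := by
  obtain ⟨CB, hCB⟩ := tendsto_div_natCast_iff.1 hB ε hε
  obtain ⟨CD, hCD⟩ := tendsto_div_natCast_iff.1 hD ε hε
  refine ⟨CB + CD, fun m k => ?_⟩
  have hmul := log_slNorm_mul_le (B m) (D k)⁻¹
  rw [slNorm_inv] at hmul
  linarith [le_of_abs_le (hCB m), le_of_abs_le (hCD k)]

lemma exists_le_log_slNorm_mul_inv {v w : EuclideanSpace ℝ (Fin 2)} (hv : ‖v‖ = 1) (hw : ‖w‖ = 1)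
    (hvw : wedge v w ≠ 0)
    (hBv : Tendsto (fun n : ℕ => Real.log ‖slAct (B n) v‖ / n) atTop (𝓝 (-L)))
    (hDw : Tendsto (fun n : ℕ => Real.log ‖slAct (D n) w‖ / n) atTop (𝓝 (-L)))
    {ε : ℝ} (hε : 0 < ε) :
    ∃ C, ∀ m k : ℕ, L * (m + k) - ε * (m + k) - C ≤ Real.log (slNorm (B m * (D k)⁻¹)) := by
  obtain ⟨CB, hCB⟩ := tendsto_div_natCast_iff.1 hBv ε hε
  obtain ⟨CD, hCD⟩ := tendsto_div_natCast_iff.1 hDw ε hε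
  refine ⟨CB + CD - Real.log |wedge v w|, fun m k => ?_⟩
  have hlog := Real.log_le_log (abs_pos.2 hvw) (abs_wedge_le_norm_slAct_mul (B m) (D k) v w)
  have hBpos := norm_slAct_pos (B m) hv
  have hDpos := norm_slAct_pos (D k) hw
  have hpos := slNorm_pos (B m * (D k)⁻¹)
  rw [Real.log_mul hBpos.ne' (by positivity), Real.log_mul hpos.ne' hDpos.ne'] at hlog
  linarith [le_of_abs_le (hCB m), le_of_abs_le (hCD k)]

variable {K : ℝ} (hBK : ∀ n, slNorm (B (n + 1) * (B n)⁻¹) ≤ K)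
  (hDK : ∀ n, slNorm (D (n + 1) * (D n)⁻¹) ≤ K)
  (hγ : ∀ v : EuclideanSpace ℝ (Fin 2), v ≠ 0 →
    ¬ (limsup (fun n : ℕ => Real.log ‖slAct (B n) v‖ / n) atTop < 0 ∧
       limsup (fun n : ℕ => Real.log ‖slAct (D n) v‖ / n) atTop < 0))

include hB hD hBK hDK hγ in
lemma exists_wedge_ne_zero_tendsto_log_norm_slAct_div (hL : 0 < L) :
    ∃ v w : EuclideanSpace ℝ (Fin 2), ‖v‖ = 1 ∧ ‖w‖ = 1 ∧ wedge v w ≠ 0 ∧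
      Tendsto (fun n : ℕ => Real.log ‖slAct (B n) v‖ / n) atTop (𝓝 (-L)) ∧
      Tendsto (fun n : ℕ => Real.log ‖slAct (D n) w‖ / n) atTop (𝓝 (-L)) := by
  obtain ⟨v, hv, hBv⟩ := exists_tendsto_log_norm_slAct_div hBK hL hB
  obtain ⟨w, hw, hDw⟩ := exists_tendsto_log_norm_slAct_div hDK hL hD
  refine ⟨v, w, hv, hw, fun hvw => ?_, hBv, hDw⟩
  have hBw : Tendsto (fun n : ℕ => Real.log ‖slAct (B n) w‖ / n) atTop (𝓝 (-L)) := by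
    rcases eq_or_eq_neg_of_wedge_eq_zero hv hw hvw with rfl | rfl
    · exact hBv
    · simpa only [slAct_neg, norm_neg] using hBv
  refine hγ w (norm_ne_zero_iff.1 (hw ▸ one_ne_zero)) ⟨?_, ?_⟩
  · rw [hBw.limsup_eq]; exact neg_neg_of_pos hL
  · rw [hDw.limsup_eq]; exact neg_neg_of_pos hL

include hB hD hBK hDK hγ in
theorem exists_abs_log_slNorm_mul_inv_sub_le {ε : ℝ} (hε : 0 < ε) :
    ∃ C, ∀ m k : ℕ,
      |Real.log (slNorm (B m * (D k)⁻¹)) - L * (m + k)| ≤ ε * (m + k) + C := by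
  obtain ⟨C, hC⟩ := exists_log_slNorm_mul_inv_le hB hD hε
  obtain ⟨C', hC'⟩ : ∃ C', ∀ m k : ℕ,
      L * (m + k) - ε * (m + k) - C' ≤ Real.log (slNorm (B m * (D k)⁻¹)) := by
    rcases le_or_gt L 0 with hL | hL
    · refine ⟨0, fun m k => ?_⟩
      have hLmk : L * (m + k) ≤ 0 := mul_nonpos_of_nonpos_of_nonneg hL (by positivity)
      have hεmk : 0 ≤ ε * (m + k : ℝ) := by positivity
      linarith [log_slNorm_nonneg (B m * (D k)⁻¹)]
    · obtain ⟨v, w, hv, hw, hvw, hBv, hDw⟩ :=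
        exists_wedge_ne_zero_tendsto_log_norm_slAct_div hB hD hBK hDK hγ hL
      exact exists_le_log_slNorm_mul_inv hv hw hvw hBv hDw hε
  refine ⟨max C C', fun m k => abs_le.2 ⟨?_, ?_⟩⟩
  · linarith [hC' m k, le_max_right C C']
  · linarith [hC m k, le_max_left C C']

end TwoSided

section Window

variable {E : ℤ → SL2} {K L : ℝ}
  (hfwd : Tendsto (fun n : ℕ => Real.log (slNorm (E n)) / n) atTop (𝓝 L))
  (hbwd : Tendsto (fun n : ℕ => Real.log (slNorm (E (-n))) / n) atTop (𝓝 L))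
  (hK : ∀ p, slNorm (E (p + 1) * (E p)⁻¹) ≤ K)
  (hγ : ∀ v : EuclideanSpace ℝ (Fin 2), v ≠ 0 →
    ¬ (limsup (fun n : ℕ => Real.log ‖slAct (E n) v‖ / n) atTop < 0 ∧
       limsup (fun n : ℕ => Real.log ‖slAct (E (-n)) v‖ / n) atTop < 0))

include hfwd hbwd hK hγ in
lemma exists_abs_log_slNorm_mul_inv_sub_le_of_nonpos_of_nonneg {ε : ℝ} (hε : 0 < ε) :
    ∃ C, ∀ p q : ℤ, p ≤ 0 → 0 ≤ q →
      |Real.log (slNorm (E q * (E p)⁻¹)) - L * (q - p)| ≤ ε * (q - p) + C := by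
  have hKbwd (n : ℕ) : slNorm (E (-(n + 1 : ℕ)) * (E (-n))⁻¹) ≤ K := by
    rw [← slNorm_inv, mul_inv_rev, inv_inv]
    convert hK (-(n + 1 : ℕ)) using 4
    push_cast
    ring
  obtain ⟨C, hC⟩ := exists_abs_log_slNorm_mul_inv_sub_le (B := fun n => E n)
    (D := fun n => E (-n)) hfwd hbwd (fun n => mod_cast hK n) hKbwd hγ hε
  refine ⟨C, fun p q hp hq => ?_⟩
  lift q to ℕ using hq
  obtain ⟨k, rfl⟩ := Int.exists_eq_neg_ofNat hp
  simpa using hC q k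

lemma exists_log_slNorm_mul_inv_clamp_le (E : ℤ → SL2) (s : ℕ) :
    ∃ c, (∀ q : ℤ, -s ≤ q → Real.log (slNorm (E q * (E (max q 0))⁻¹)) ≤ c) ∧
      ∀ p : ℤ, p ≤ s → Real.log (slNorm (E p * (E (min p 0))⁻¹)) ≤ c := by
  obtain ⟨c, hc⟩ := ((Set.finite_Icc (-s : ℤ) s).image
    fun i => Real.log (slNorm (E i * (E 0)⁻¹))).bddAbove
  have hle (i : ℤ) (hi : i ∈ Set.Icc (-s : ℤ) s) : Real.log (slNorm (E i * (E 0)⁻¹)) ≤ c :=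
    hc ⟨i, hi, rfl⟩
  have hself (i : ℤ) : Real.log (slNorm (E i * (E i)⁻¹)) ≤ c := by
    simpa only [mul_inv_cancel] using hle 0 (by simp)
  refine ⟨c, fun q hq => ?_, fun p hp => ?_⟩
  · rcases le_total q 0 with hq₀ | hq₀
    · rw [max_eq_right hq₀]
      exact hle q ⟨hq, by omega⟩
    · rw [max_eq_left hq₀]
      exact hself q
  · rcases le_total p 0 with hp₀ | hp₀
    · rw [min_eq_left hp₀]
      exact hself p
    · rw [min_eq_right hp₀]
      exact hle p ⟨by omega, hp⟩

include hfwd hbwd hK hγ in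
theorem exists_abs_log_slNorm_mul_inv_sub_le_of_le_of_le {ε : ℝ} (hε : 0 < ε) (s : ℕ) :
    ∃ C, ∀ p q : ℤ, p ≤ s → -s ≤ q →
      |Real.log (slNorm (E q * (E p)⁻¹)) - L * (q - p)| ≤ ε * (q - p) + C := by
  obtain ⟨C, hC⟩ := exists_abs_log_slNorm_mul_inv_sub_le_of_nonpos_of_nonneg hfwd hbwd hK hγ hε
  obtain ⟨c, hcq, hcp⟩ := exists_log_slNorm_mul_inv_clamp_le E s
  refine ⟨C + 2 * c + (|L| + ε) * (2 * s), fun p q hp hq => ?_⟩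
  set q' := max q 0
  set p' := min p 0
  set d : ℝ := (q' - p') - (q - p) with hd
  have hd₀ : 0 ≤ d := by rw [hd]; exact_mod_cast (by omega : 0 ≤ (q' - p') - (q - p))
  have hds : d ≤ 2 * s := by rw [hd]; exact_mod_cast (by omega : (q' - p') - (q - p) ≤ 2 * s)
  calc |Real.log (slNorm (E q * (E p)⁻¹)) - L * (q - p)|
      = |(Real.log (slNorm (E q * (E p)⁻¹)) - Real.log (slNorm (E q' * (E p')⁻¹))) +
          (Real.log (slNorm (E q' * (E p')⁻¹)) - L * (q' - p')) + L * d| := by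
        rw [hd]
        ring_nf
    _ ≤ (c + c) + (ε * (q' - p') + C) + |L| * d := by
        refine (abs_add_three _ _ _).trans (add_le_add_three ?_ ?_ ?_)
        · exact (abs_log_slNorm_mul_inv_sub_log_slNorm_mul_inv_le _ _ _ _).trans
            (add_le_add (hcq q hq) (hcp p hp))
        · exact hC p' q' (min_le_right _ _) (le_max_right _ _)
        · rw [abs_mul, abs_of_nonneg hd₀]
    _ = ε * (q - p) + (C + 2 * c + (|L| + ε) * d) := by
        rw [hd]
        ring
    _ ≤ ε * (q - p) + (C + 2 * c + (|L| + ε) * (2 * s)) := by gcongr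

end Window

section Cocycle

variable {𝒜 : Type*} {A : (ℤ → 𝒜) → SL2} {Ω : Set (ℤ → 𝒜)} {ω ρ : ℤ → 𝒜}

lemma shift_shift (p q : ℤ) (ω : ℤ → 𝒜) : shift p (shift q ω) = shift (p + q) ω := by
  funext n
  simp only [shift, add_assoc]

lemma shift_zero (ω : ℤ → 𝒜) : shift 0 ω = ω := by
  funext n
  simp only [shift, add_zero]

lemma IsSubshift.shift_mem_int [TopologicalSpace 𝒜] (hΩ : IsSubshift Ω) (hω : ω ∈ Ω) (k : ℤ) :
    shift k ω ∈ Ω := by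
  induction k with
  | zero => rwa [shift_zero]
  | succ k ih => rw [add_comm, ← shift_shift]; exact hΩ.shift_mem _ ih
  | pred k ih => rw [sub_eq_neg_add, ← shift_shift]; exact hΩ.shift_neg_mem _ ih

lemma cocycle_natCast (A : (ℤ → 𝒜) → SL2) (n : ℕ) (ω : ℤ → 𝒜) :
    cocycle A n ω = cocycleP A n ω := by
  simp [cocycle]

lemma cocycle_neg_natCast (A : (ℤ → 𝒜) → SL2) (n : ℕ) (ω : ℤ → 𝒜) :
    cocycle A (-n) ω = (cocycleP A n (shift (-n) ω))⁻¹ := by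
  rcases n.eq_zero_or_pos with rfl | hn
  · simp [cocycle, cocycleP]
  · simp [cocycle, hn.ne']

lemma cocycleP_succ_eq_mul (A : (ℤ → 𝒜) → SL2) (n : ℕ) (ω : ℤ → 𝒜) :
    cocycleP A (n + 1) ω = cocycleP A n (shift 1 ω) * A ω := by
  induction n with
  | zero => simp [cocycleP, shift_zero]
  | succ n ih =>
    rw [cocycleP, ih, cocycleP, shift_shift, mul_assoc]
    push_cast
    rfl

lemma cocycle_add_one (A : (ℤ → 𝒜) → SL2) (p : ℤ) (ω : ℤ → 𝒜) :
    cocycle A (p + 1) ω = A (shift p ω) * cocycle A p ω := by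
  rcases le_or_gt 0 p with hp | hp
  · lift p to ℕ using hp
    rw [cocycle_natCast, ← cocycleP, ← cocycle_natCast, Nat.cast_succ]
  · obtain ⟨n, rfl⟩ := Int.eq_negSucc_of_lt_zero hp
    rw [Int.negSucc_eq, show -(n + 1 : ℤ) + 1 = -n by ring, cocycle_neg_natCast, ← Nat.cast_succ,
      cocycle_neg_natCast, cocycleP_succ_eq_mul, mul_inv_rev, mul_inv_cancel_left, shift_shift]
    push_cast
    rw [show 1 + -(n + 1 : ℤ) = -n by ring]

lemma cocycle_shift (A : (ℤ → 𝒜) → SL2) (n : ℕ) (p : ℤ) (ω : ℤ → 𝒜) :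
    cocycle A n (shift p ω) = cocycle A (p + n) ω * (cocycle A p ω)⁻¹ := by
  induction n with
  | zero => simp [cocycle, cocycleP]
  | succ n ih =>
    rw [Nat.cast_succ, cocycle_add_one, ih, shift_shift, ← add_assoc, cocycle_add_one, mul_assoc,
      add_comm p n]

lemma word_eq_map (ω : ℤ → 𝒜) (k : ℤ) (n : ℕ) :
    word ω k n = (List.range n).map fun i : ℕ => ω (k + i) := by
  rw [List.map_eq_flatMap]
  simp [word, List.flatMap_def, Function.comp_def]

lemma apply_add_eq_of_word_eq {a b i : ℤ} {n : ℕ} (h : word ω a n = word ρ b n)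
    (hi : 0 ≤ i) (hin : i < n) : ω (a + i) = ρ (b + i) := by
  lift i to ℕ using hi
  have hget := congrArg (fun l => l[i]?) h
  simpa [word_eq_map, show i < n by omega] using hget

lemma LocConstOn.exists_radius_ge {β : Type*} {A : (ℤ → 𝒜) → β} (hA : LocConstOn Ω A) (N₀ : ℕ) :
    ∃ N ≥ N₀, ∀ ω ∈ Ω, ∀ ρ ∈ Ω, (∀ i : ℤ, |i| ≤ (N : ℤ) → ω i = ρ i) → A ω = A ρ := by
  obtain ⟨N, hN⟩ := hA
  exact ⟨max N N₀, le_max_right _ _, fun ω hω ρ hρ h =>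
    hN ω hω ρ hρ fun i hi => h i (hi.trans (mod_cast le_max_left N N₀))⟩

lemma cocycleP_congr {n : ℕ} (h : ∀ i < n, A (shift i ω) = A (shift i ρ)) :
    cocycleP A n ω = cocycleP A n ρ := by
  induction n with
  | zero => rfl
  | succ n ih => rw [cocycleP, cocycleP, h n n.lt_succ_self, ih fun i hi => h i (by omega)]

variable (hΩ : ∀ ω ∈ Ω, ∀ k, shift k ω ∈ Ω)

include hΩ in
lemma cocycle_eq_cocycle_shift_of_word_eq {N n : ℕ}
    (hN : ∀ ω ∈ Ω, ∀ ρ ∈ Ω, (∀ i : ℤ, |i| ≤ (N : ℤ) → ω i = ρ i) → A ω = A ρ)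
    (hω : ω ∈ Ω) (hρ : ρ ∈ Ω) {p : ℤ} (h : word ω (-N) (n + 2 * N) = word ρ (p - N) (n + 2 * N)) :
    cocycle A n ω = cocycle A n (shift p ρ) := by
  rw [cocycle_natCast, cocycle_natCast]
  refine cocycleP_congr fun i hi =>
    hN _ (hΩ _ hω _) _ (hΩ _ (hΩ _ hρ _) _) fun t ht => ?_
  have ht' := abs_le.1 ht
  have hletter := apply_add_eq_of_word_eq (i := t + i + N) h (by omega) (by omega)
  simp only [shift]
  convert hletter using 2 <;> ring

variable {r : ℕ} {lead : Fin r → ℤ → 𝒜} (hα : CondAlpha Ω lead) (hA : LocConstOn Ω A)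

include hΩ hα hA in
lemma exists_cocycle_eq_cocycle_shift_lead :
    ∃ s : ℕ, ∀ n : ℕ, ∀ ω ∈ Ω, ∃ j, ∃ p : ℤ, p ≤ s ∧ -s ≤ p + n ∧
      cocycle A n ω = cocycle A n (shift p (lead j)) := by
  obtain ⟨hlead, N₀, hwords⟩ := hα
  obtain ⟨N, hN₀, hN⟩ := hA.exists_radius_ge N₀
  refine ⟨N + 1, fun n ω hω => ?_⟩
  have hmem : word ω (-N) (n + 2 * N) ∈ WordsN Ω (n + 2 * N) := ⟨ω, hω, _, rfl⟩
  rw [hwords _ (by omega)] at hmem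
  obtain ⟨j, k, hk, hword⟩ := hmem
  refine ⟨j, 1 - k + N, by omega, by omega,
    cocycle_eq_cocycle_shift_of_word_eq hΩ hN hω (hlead j) ?_⟩
  rwa [add_sub_cancel_right]

include hΩ hα hA in
lemma exists_slNorm_le : ∃ K, ∀ ω ∈ Ω, slNorm (A ω) ≤ K := by
  obtain ⟨s, hs⟩ := exists_cocycle_eq_cocycle_shift_lead hΩ hα hA
  obtain ⟨K, hK⟩ := (((Set.finite_Icc (-s - 1 : ℤ) s).prod Set.finite_univ).image
    fun x : ℤ × Fin r => slNorm (A (shift x.1 (lead x.2)))).bddAbove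
  refine ⟨K, fun ω hω => ?_⟩
  obtain ⟨j, p, hps, hsp, heq⟩ := hs 1 ω hω
  have hAω : A ω = A (shift p (lead j)) := by
    simpa [cocycle, cocycleP, shift_zero] using heq
  rw [hAω]
  exact hK ⟨(p, j), ⟨⟨by omega, hps⟩, trivial⟩, rfl⟩

end Cocycle

theorem statement5_general {𝒜 : Type*} {Ω : Set (ℤ → 𝒜)} (hΩ : ∀ ω ∈ Ω, ∀ k, shift k ω ∈ Ω)
    {r : ℕ} {lead : Fin r → ℤ → 𝒜} (hα : CondAlpha Ω lead)
    {A : (ℤ → 𝒜) → SL2} (hA : LocConstOn Ω A) {Λ : ℝ}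
    (hΛ : ∀ j,
      Tendsto (fun n : ℕ => Real.log (slNorm (cocycle A n (lead j))) / n) atTop (𝓝 Λ) ∧
      Tendsto (fun n : ℕ => Real.log (slNorm (cocycle A (-(n : ℤ)) (lead j))) / n) atTop (𝓝 Λ))
    (hγ : ∀ j, ∀ v : EuclideanSpace ℝ (Fin 2), v ≠ 0 →
      ¬ (limsup (fun n : ℕ => Real.log ‖slAct (cocycle A n (lead j)) v‖ / n) atTop < 0 ∧
        limsup (fun n : ℕ => Real.log ‖slAct (cocycle A (-(n : ℤ)) (lead j)) v‖ / n) atTop < 0)) :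
    TendstoUniformlyOn (fun (n : ℕ) (ω : ℤ → 𝒜) => Real.log (slNorm (cocycle A n ω)) / n)
      (fun _ => Λ) atTop Ω := by
  obtain ⟨K, hK⟩ := exists_slNorm_le hΩ hα hA
  obtain ⟨s, hs⟩ := exists_cocycle_eq_cocycle_shift_lead hΩ hα hA
  have hstep (j : Fin r) (p : ℤ) :
      slNorm (cocycle A (p + 1) (lead j) * (cocycle A p (lead j))⁻¹) ≤ K := by
    rw [cocycle_add_one, mul_inv_cancel_right]
    exact hK _ (hΩ _ (hα.1 j) p)
  refine tendstoUniformlyOn_div_natCast fun ε hε => ?_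
  choose C hC using fun j => exists_abs_log_slNorm_mul_inv_sub_le_of_le_of_le
    (E := fun p => cocycle A p (lead j)) (hΛ j).1 (hΛ j).2 (hstep j) (hγ j) hε s
  obtain ⟨C', hC'⟩ := (Set.finite_range C).bddAbove
  refine ⟨C', fun n ω hω => ?_⟩
  obtain ⟨j, p, hps, hsp, heq⟩ := hs n ω hω
  have hwindow := hC j p (p + n) hps hsp
  push_cast at hwindow
  rw [add_sub_cancel_left] at hwindow
  rw [heq, cocycle_shift]
  exact hwindow.trans (add_le_add_right (hC' ⟨j, rfl⟩) _)

/-- **Main technical result.** Over a minimal uniquely ergodic subshift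
satisfying (LSC), every locally constant `SL(2,ℝ)`-valued function is uniform. -/
theorem statement5 {𝒜 : Type*} [Fintype 𝒜] [TopologicalSpace 𝒜] [DiscreteTopology 𝒜]
    {Ω : Set (ℤ → 𝒜)} (hΩ : IsSubshift Ω) (hmin : IsMinimalSubshift Ω)
    (hue : UniformWordFreq Ω) (hLSC : SatisfiesLSC Ω)
    (A : (ℤ → 𝒜) → SL2) (hA : LocConstOn Ω A) :
    IsUniform Ω A := by
  obtain ⟨r, lead, hα, hβ, hγ⟩ := hLSC
  exact (hβ A hA).imp fun Λ hΛ =>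
    statement5_general (fun _ => hΩ.shift_mem_int) hα hA hΛ (hγ A hA)
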